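/- Let t ∈ Y_n be a planar binary tree whose i-th interior leaf is right-oriented, for some 1 ≤ i ≤ n−1 (i.e. φ_n(t)_i = −1). If w ∈ Y_n satisfies w ≤ t in the weak order on Y_n, then the i-th interior leaf of w is also right-oriented (i.e. φ_n(w)_i = −1). -/

import Mathlib

/-- Planar binary trees: `leaf` is the tree `|` (no interior vertex) and
`node l r = l ∨ r` is the grafting of `l` and `r` (their roots are joined to a new
vertex, which becomes the root). -/
inductive PBTree : Type
  | leaf : PBTree
  | node : PBTree → PBTree → PBTree
deriving DecidableEq

/-- The number of interior vertices of a planar binary tree: `t ∈ Yₙ` iff `t.size = n`. -/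
def PBTree.size : PBTree → ℕ
  | .leaf => 0
  | .node l r => l.size + r.size + 1

/-- The weak order on planar binary trees, generated transitively by
(a) `u ≤ u' → v ≤ v' → u∨v ≤ u'∨v'` and (b) `(u∨v)∨w ≤ u∨(v∨w)`. -/
inductive TreeLe : PBTree → PBTree → Prop
  | refl (t : PBTree) : TreeLe t t
  | graft {u u' v v' : PBTree} : TreeLe u u' → TreeLe v v' →
      TreeLe (.node u v) (.node u' v')
  | rotate (u v w : PBTree) : TreeLe (.node (.node u v) w) (.node u (.node v w))
  | trans {a b c : PBTree} : TreeLe a b → TreeLe b c → TreeLe a c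

/-- `phi t` is `φₙ(t) = (ε₁, …, ε_{n-1}) ∈ Qₙ = {±1}^{n-1}` for `t ∈ Yₙ`: the orientations
of the `n-1` interior leaves of `t` (all leaves except the two extreme ones), where
`εᵢ = -1` if the `i`-th interior leaf is right-oriented (SW–NE, a right child) and
`εᵢ = +1` if it is left-oriented (SE–NW, a left child).  Elements of `Qₙ` are modelled
as lists of integers of length `n-1` with entries `±1`. -/
def phi : PBTree → List ℤ
  | .leaf => []
  | .node .leaf .leaf => []
  | .node .leaf (.node c d) => 1 :: phi (.node c d)
  | .node (.node a b) .leaf => phi (.node a b) ++ [-1]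
  | .node (.node a b) (.node c d) => phi (.node a b) ++ ([-1, 1] ++ phi (.node c d))

/-!
Record the orientations of all leaves of a tree, extreme ones included, the orientation of the tree
`|` being prescribed. This list for `u ∨ v` is the list for `u` as a left subtree followed by
the list for `v` as a right subtree. Hence the rotation `(u ∨ v) ∨ w ≤ u ∨ (v ∨ w)` only turns `v`
from a right subtree into a left one, which can only raise orientations from `-1` to `+1`. So `φ` is
monotone for the entrywise order, and an entry of `φ(w)` lying below `-1 = min {±1}` equals `-1`.
-/

theorem forall₂_trans {α : Type*} {R : α → α → Prop} [IsTrans α R] {l₁ l₂ l₃ : List α}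
    (h₁₂ : List.Forall₂ R l₁ l₂) (h₂₃ : List.Forall₂ R l₂ l₃) : List.Forall₂ R l₁ l₃ := by
  induction h₁₂ generalizing l₃ with
  | nil => exact h₂₃
  | cons hab _ ih =>
    cases h₂₃ with
    | cons hbc htail => exact .cons (_root_.trans hab hbc) (ih htail)

theorem forall₂_tail_dropLast {α β : Type*} {R : α → β → Prop} {l₁ : List α} {l₂ : List β}
    (h : List.Forall₂ R l₁ l₂) : List.Forall₂ R l₁.tail.dropLast l₂.tail.dropLast := by
  simp only [← List.drop_one, List.dropLast_eq_take, List.length_drop, h.length_eq]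
  exact List.forall₂_take _ (List.forall₂_drop 1 h)

/-- The orientations of all leaves of a tree, from left to right and including the two extreme
leaves: `+1` for a left child, `-1` for a right child. The tree `|` has no parent vertex, so its
leaf gets the orientation `s`: this is `+1` or `-1` when the tree hangs as a left or right
subtree. -/
def PBTree.leafOrientations (s : ℤ) : PBTree → List ℤ
  | .leaf => [s]
  | .node l r => l.leafOrientations 1 ++ r.leafOrientations (-1)

namespace PBTree

theorem leafOrientations_mono {s s' : ℤ} (hs : s ≤ s') (t : PBTree) :
    List.Forall₂ (· ≤ ·) (t.leafOrientations s) (t.leafOrientations s') := by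
  cases t with
  | leaf => exact .cons hs .nil
  | node l r => exact List.forall₂_refl _

theorem neg_one_le_of_mem_leafOrientations {s ε : ℤ} (hs : -1 ≤ s) {t : PBTree}
    (hε : ε ∈ t.leafOrientations s) : -1 ≤ ε := by
  induction t generalizing s with
  | leaf => exact (List.mem_singleton.1 hε).symm ▸ hs
  | node l r ihl ihr =>
    rcases List.mem_append.1 hε with hl | hr
    · exact ihl (by norm_num) hl
    · exact ihr le_rfl hr

theorem leafOrientations_eq_cons_phi_concat (s : ℤ) {t : PBTree} (ht : t ≠ leaf) :
    t.leafOrientations s = 1 :: (phi t ++ [-1]) := by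
  fun_induction phi t generalizing s with
  | case1 => exact absurd rfl ht
  | case2 => rfl
  | case3 c d ih =>
    rw [leafOrientations, ih (-1) nofun]
    rfl
  | case4 a b ih =>
    rw [leafOrientations, ih 1 nofun]
    rfl
  | case5 a b c d ihl ihr =>
    rw [leafOrientations, ihl 1 nofun, ihr (-1) nofun]
    simp only [List.cons_append, List.append_assoc, List.nil_append]

theorem phi_eq_tail_dropLast_leafOrientations (s : ℤ) (t : PBTree) :
    phi t = (t.leafOrientations s).tail.dropLast := by
  cases t with
  | leaf => rfl
  | node l r =>
    have hnode : node l r ≠ leaf := nofun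
    rw [leafOrientations_eq_cons_phi_concat s hnode, List.tail_cons, List.dropLast_concat]

end PBTree

namespace TreeLe

variable {a b : PBTree}

theorem forall₂_leafOrientations_le (h : TreeLe a b) (s : ℤ) :
    List.Forall₂ (· ≤ ·) (a.leafOrientations s) (b.leafOrientations s) := by
  induction h generalizing s with
  | refl t => exact List.forall₂_refl _
  | graft _ _ ihu ihv => exact List.rel_append (ihu 1) (ihv (-1))
  | rotate u v w =>
    simp only [PBTree.leafOrientations, List.append_assoc]
    have raise_v := v.leafOrientations_mono (show (-1 : ℤ) ≤ 1 by norm_num)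
    exact List.rel_append (List.forall₂_refl _) (List.rel_append raise_v (List.forall₂_refl _))
  | trans _ _ ihab ihbc => exact forall₂_trans (ihab s) (ihbc s)

theorem forall₂_phi_le (h : TreeLe a b) : List.Forall₂ (· ≤ ·) (phi a) (phi b) := by
  simp only [PBTree.phi_eq_tail_dropLast_leafOrientations 1]
  exact forall₂_tail_dropLast (h.forall₂_leafOrientations_le 1)

end TreeLe

theorem neg_one_le_of_mem_phi {t : PBTree} {ε : ℤ} (hε : ε ∈ phi t) : -1 ≤ ε := by
  rw [PBTree.phi_eq_tail_dropLast_leafOrientations 1] at hε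
  exact PBTree.neg_one_le_of_mem_leafOrientations (by norm_num)
    (List.mem_of_mem_tail (List.mem_of_mem_dropLast hε))

/-- Lemma 3.4: let `t ∈ Yₙ` be a tree whose `i`-th interior leaf is
right-oriented, i.e. `φₙ(t)ᵢ = -1` (with `1 ≤ i ≤ n-1`; lists being 0-indexed, the
`i`-th entry of `φₙ(t)` is `(phi t)[i-1]`, so we quantify over the 0-based index).
If `w ∈ Yₙ` satisfies `w ≤ t` in the weak order, then the `i`-th interior leaf of `w`
is also right-oriented: `φₙ(w)ᵢ = -1`. -/
theorem stmt16 (n : ℕ) (t w : PBTree) (ht : t.size = n) (hw : w.size = n)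
    (i : ℕ) (hi : i < (phi t).length) (hor : (phi t)[i] = -1)
    (hle : TreeLe w t) :
    (phi w)[i]? = some (-1) := by
  have hphi := hle.forall₂_phi_le
  have hiw : i < (phi w).length := hphi.length_eq ▸ hi
  have upper : (phi w)[i] ≤ -1 := hor ▸ hphi.get hiw hi
  have lower : -1 ≤ (phi w)[i] := neg_one_le_of_mem_phi (List.getElem_mem hiw)
  rw [List.getElem?_eq_getElem hiw, le_antisymm upper lower]
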